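/- arXiv:1705.05781 — 2 statements merged into one kernel-verified Lean document; each statement's English description precedes it below -/
import Mathlib

section
/- Let L be a finite modular semilattice and B a (∧,∨)-closed subset of L^n. For ∨-irreducible elements a, b of the semilattice B, the join a ∨ b does not exist in B if and only if there exist i ∈ [n] and ∨-irreducible elements l, l' of the semilattice π_i(B) such that the join l ∨ l' does not exist in π_i(B), e^i_l ≤ a, and e^i_{l'} ≤ b. -/
/-- The join of `a` and `b` exists (there is a least upper bound of the pair). -/
def JoinExists {α : Type*} [Preorder α] (a b : α) : Prop :=
  ∃ j, IsLUB ({a, b} : Set α) j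

/-- `a` and `b` are incomparable. -/
def Incomp {α : Type*} [Preorder α] (a b : α) : Prop :=
  ¬ a ≤ b ∧ ¬ b ≤ a

/-- A collinear triple: pairwise incomparable elements whose pairwise joins all exist
and coincide. -/
def Collinear3 {α : Type*} [Preorder α] (x y z : α) : Prop :=
  Incomp x y ∧ Incomp y z ∧ Incomp z x ∧
  ∃ j, IsLUB ({x, y} : Set α) j ∧ IsLUB ({y, z} : Set α) j ∧ IsLUB ({z, x} : Set α) j

/-- `l` is ∨-irreducible: `l` is not the minimum element, and whenever `l` is the join
of `a` and `b`, `l = a` or `l = b`. -/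
def JoinIrred {α : Type*} [Preorder α] (l : α) : Prop :=
  (¬ ∀ x, l ≤ x) ∧ ∀ a b, IsLUB ({a, b} : Set α) l → l = a ∨ l = b

/-- A modular semilattice: (existing joins witness that) every principal ideal is a
(modular) lattice, the modular law holds in every principal ideal, and the join of any
three elements exists whenever the three pairwise joins exist. -/
def ModularSemilattice (α : Type*) [SemilatticeInf α] : Prop :=
  (∀ a b : α, (∃ u, a ≤ u ∧ b ≤ u) → JoinExists a b) ∧
  (∀ x a b c : α, a ≤ x → b ≤ x → c ≤ x → a ≤ c →
    ∀ j, IsLUB ({a, b} : Set α) j → IsLUB ({a, b ⊓ c} : Set α) (j ⊓ c)) ∧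
  (∀ x y z : α, JoinExists x y → JoinExists y z → JoinExists z x →
    ∃ j, IsLUB ({x, y, z} : Set α) j)
/-- `j` is the least upper bound of `a` and `b` within the subset `B`. -/
def IsLUBwithin {α : Type*} [Preorder α] (B : Set α) (a b j : α) : Prop :=
  j ∈ B ∧ a ≤ j ∧ b ≤ j ∧ ∀ u ∈ B, a ≤ u → b ≤ u → j ≤ u

/-- The join of `a` and `b` exists in the semilattice `B`. -/
def JoinExistsIn {α : Type*} [Preorder α] (B : Set α) (a b : α) : Prop :=
  ∃ j, IsLUBwithin B a b j

/-- `l` is a ∨-irreducible element of the semilattice `B`: `l ∈ B`, `l` is not the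
minimum element of `B`, and whenever `l` is the join (within `B`) of `a, b ∈ B`,
`l = a` or `l = b`. -/
def JoinIrredIn {α : Type*} [Preorder α] (B : Set α) (l : α) : Prop :=
  l ∈ B ∧ (¬ ∀ x ∈ B, l ≤ x) ∧
  ∀ a b, a ∈ B → b ∈ B → IsLUBwithin B a b l → l = a ∨ l = b

/-- `B` is (∧,∨)-closed: closed under meets and under those joins that exist. -/
def WedgeVeeClosed {α : Type*} [SemilatticeInf α] (B : Set α) : Prop :=
  (∀ a ∈ B, ∀ b ∈ B, a ⊓ b ∈ B) ∧
  (∀ a ∈ B, ∀ b ∈ B, ∀ j, IsLUB ({a, b} : Set α) j → j ∈ B)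

/-- A collinear triple in the semilattice `B`: pairwise incomparable, all pairwise
joins exist in `B` and coincide. -/
def CollinearIn {α : Type*} [Preorder α] (B : Set α) (x y z : α) : Prop :=
  Incomp x y ∧ Incomp y z ∧ Incomp z x ∧
  ∃ j, IsLUBwithin B x y j ∧ IsLUBwithin B y z j ∧ IsLUBwithin B z x j

/-!
In a product, `a ∨ b` exists as soon as it exists in every coordinate, so if it does not exist then
some `a i` and `b i` have no common upper bound. Joins being determined pairwise, the elements
bounded together with a fixed `y` are stable under existing joins. Hence an element with no common
upper bound with `y` has a ∨-irreducible below it with the same property, and applying this on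
both sides shrinks `a i`, `b i` to ∨-irreducibles `l`, `l'`. The base of `l` is below `a` exactly
when `l ≤ a i`. Cutting lifts down by a lift of a common bound shows that `π_i(B)` contains the
joins of its pairs that are bounded in `π_i(B)`, which gives the converse. Joins of pairs bounded
only in `L` can lie outside `π_i(B)`.
-/

section BoundedPairs

variable {α : Type*} [Preorder α]

theorem bddAbove_pair_iff {x y : α} : BddAbove {x, y} ↔ ∃ u, x ≤ u ∧ y ≤ u := by
  simp only [BddAbove, Set.Nonempty, mem_upperBounds, Set.forall_mem_insert,
    Set.mem_singleton_iff, forall_eq]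

theorem isLUBwithin_of_isLUB {S : Set α} {x y j : α} (h : IsLUB {x, y} j) (hj : j ∈ S) :
    IsLUBwithin S x y j :=
  ⟨hj, h.1 (by simp), h.1 (by simp), fun _ _ hxu hyu => h.2 (by simp [hxu, hyu])⟩

theorem JoinExistsIn.bddAbove {S : Set α} {x y : α} : JoinExistsIn S x y → BddAbove {x, y}
  | ⟨j, _, hxj, hyj, _⟩ => bddAbove_pair_iff.2 ⟨j, hxj, hyj⟩

/-- Bounded completeness for pairs: two elements with a common upper bound have a join. -/
def IsBoundedComplete (α : Type*) [Preorder α] : Prop :=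
  ∀ ⦃x y : α⦄, BddAbove {x, y} → JoinExists x y

/-- Coherence for triples, as in domain theory: three pairwise bounded elements are bounded.
Together with `IsBoundedComplete` it expresses that joins of triples are determined pairwise. -/
def IsCoherent (α : Type*) [Preorder α] : Prop :=
  ∀ ⦃x y z : α⦄, BddAbove {x, y} → BddAbove {y, z} → BddAbove {z, x} → BddAbove {x, y, z}

/-- `S` contains the join of any two of its elements that have a common upper bound in `S`.
This is the closure that the projections of a (∧,∨)-closed set retain. -/
def BoundedJoinClosed (S : Set α) : Prop :=
  ∀ ⦃x⦄, x ∈ S → ∀ ⦃y⦄, y ∈ S → ∀ ⦃u⦄, u ∈ S → x ≤ u → y ≤ u → ∀ ⦃j⦄, IsLUB {x, y} j → j ∈ S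

theorem BoundedJoinClosed.exists_isLUB_mem {S : Set α} (hS : BoundedJoinClosed S)
    (hα : IsBoundedComplete α) {x y u : α} (hx : x ∈ S) (hy : y ∈ S) (hu : u ∈ S)
    (hxu : x ≤ u) (hyu : y ≤ u) : ∃ j ∈ S, IsLUB {x, y} j := by
  obtain ⟨j, hj⟩ := hα (bddAbove_pair_iff.2 ⟨u, hxu, hyu⟩)
  exact ⟨j, hS hx hy hu hxu hyu hj, hj⟩

end BoundedPairs

section JoinIrreducible

variable {α : Type*} [PartialOrder α] {S : Set α} {x y : α}

theorem exists_isLUBwithin_lt_of_not_joinIrredIn (hx : x ∈ S) (hmin : ¬ ∀ z ∈ S, x ≤ z)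
    (hirr : ¬ JoinIrredIn S x) : ∃ p ∈ S, ∃ q ∈ S, p < x ∧ q < x ∧ IsLUBwithin S p q x := by
  by_contra! h
  refine hirr ⟨hx, hmin, fun p q hp hq hlub => ?_⟩
  by_contra! hne
  exact h p hp q hq (hlub.2.1.lt_of_ne hne.1.symm) (hlub.2.2.1.lt_of_ne hne.2.symm) hlub

variable [WellFoundedLT α]

theorem bddAbove_pair_of_forall_joinIrredIn (hα : IsBoundedComplete α) (hcoh : IsCoherent α)
    (hS : BoundedJoinClosed S) (hx : x ∈ S) (hy : y ∈ S)
    (h : ∀ l, JoinIrredIn S l → l ≤ x → BddAbove {l, y}) : BddAbove {x, y} := by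
  induction x using WellFoundedLT.induction with
  | ind x ih =>
  by_cases hirr : JoinIrredIn S x
  · exact h x hirr le_rfl
  by_cases hmin : ∀ z ∈ S, x ≤ z
  · exact bddAbove_pair_iff.2 ⟨y, hmin y hy, le_rfl⟩
  obtain ⟨p, hp, q, hq, hpx, hqx, -, -, -, hleast⟩ :=
    exists_isLUBwithin_lt_of_not_joinIrredIn hx hmin hirr
  have hpy : BddAbove {p, y} := ih p hpx hp fun l hl hlp => h l hl (hlp.trans hpx.le)
  have hqy : BddAbove {q, y} := ih q hqx hq fun l hl hlq => h l hl (hlq.trans hqx.le)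
  have hpq : BddAbove {p, q} := bddAbove_pair_iff.2 ⟨x, hpx.le, hqx.le⟩
  obtain ⟨u, hu⟩ := hcoh hpq hqy (Set.pair_comm p y ▸ hpy)
  obtain ⟨j, hjS, hj⟩ := hS.exists_isLUB_mem hα hp hq hx hpx.le hqx.le
  have hxj : x ≤ j := hleast j hjS (hj.1 (by simp)) (hj.1 (by simp))
  have hju : j ≤ u := hj.2 (upperBounds_mono_set (by grind) hu)
  exact bddAbove_pair_iff.2 ⟨u, hxj.trans hju, hu (by simp)⟩

theorem exists_joinIrredIn_le_not_bddAbove_pair (hα : IsBoundedComplete α) (hcoh : IsCoherent α)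
    (hS : BoundedJoinClosed S) (hx : x ∈ S) (hy : y ∈ S) (hxy : ¬ BddAbove {x, y}) :
    ∃ l l', JoinIrredIn S l ∧ JoinIrredIn S l' ∧ l ≤ x ∧ l' ≤ y ∧ ¬ BddAbove {l, l'} := by
  by_contra! h
  refine hxy (bddAbove_pair_of_forall_joinIrredIn hα hcoh hS hx hy fun l hl hlx => ?_)
  rw [Set.pair_comm]
  refine bddAbove_pair_of_forall_joinIrredIn hα hcoh hS hy hl.1 fun l' hl' hly => ?_
  rw [Set.pair_comm]
  exact h l l' hl hl' hlx hly

end JoinIrreducible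

section WedgeVeeClosed

variable {α : Type*} [SemilatticeInf α]

theorem exists_isLeast_of_infClosed [WellFoundedLT α] {S : Set α} (hS : InfClosed S)
    (hne : S.Nonempty) : ∃ e, IsLeast S e :=
  (exists_minimal_of_wellFoundedLT (· ∈ S) hne).imp
    fun _ he => hS.codirectedOn.minimal_iff_isLeast.1 he

theorem WedgeVeeClosed.infClosed {B : Set α} (hB : WedgeVeeClosed B) : InfClosed B :=
  fun a ha b hb => hB.1 a ha b hb

theorem WedgeVeeClosed.joinExistsIn_iff_bddAbove {B : Set α} (hB : WedgeVeeClosed B)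
    (hα : IsBoundedComplete α) {a b : α} (ha : a ∈ B) (hb : b ∈ B) :
    JoinExistsIn B a b ↔ BddAbove {a, b} :=
  ⟨JoinExistsIn.bddAbove, fun h =>
    (hα h).imp fun j hj => isLUBwithin_of_isLUB hj (hB.2 a ha b hb j hj)⟩

theorem ModularSemilattice.isBoundedComplete (hα : ModularSemilattice α) : IsBoundedComplete α :=
  fun x y hxy => hα.1 x y (bddAbove_pair_iff.1 hxy)

theorem ModularSemilattice.isCoherent (hα : ModularSemilattice α) : IsCoherent α := by
  intro x y z hxy hyz hzx
  have hcomplete := hα.isBoundedComplete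
  obtain ⟨j, hj⟩ := hα.2.2 x y z (hcomplete hxy) (hcomplete hyz) (hcomplete hzx)
  exact ⟨j, hj.1⟩

end WedgeVeeClosed

section Product

variable {ι : Type*} {L : ι → Type*}

theorem bddAbove_pair_pi [∀ i, Preorder (L i)] {a b : ∀ i, L i} :
    BddAbove {a, b} ↔ ∀ i, BddAbove {a i, b i} := by
  simp only [bddAbove_pi, Set.image_pair, Function.eval]

theorem isLUB_pair_pi [∀ i, Preorder (L i)] {a b j : ∀ i, L i} :
    IsLUB {a, b} j ↔ ∀ i, IsLUB {a i, b i} (j i) := by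
  simp only [isLUB_pi, Set.image_pair, Function.eval]

theorem IsBoundedComplete.pi [∀ i, Preorder (L i)] (hL : ∀ i, IsBoundedComplete (L i)) :
    IsBoundedComplete (∀ i, L i) := by
  intro a b hab
  choose j hj using fun i => hL i (bddAbove_pair_pi.1 hab i)
  exact ⟨j, isLUB_pair_pi.2 hj⟩

/-- `e` is the base `e^i_l` of `B`: the least element of `B` whose `i`-th component is `l`.
It is a predicate because the base is undefined when no element of `B` has that component. -/
def IsBase [∀ i, Preorder (L i)] (B : Set (∀ i, L i)) (i : ι) (l : L i) (e : ∀ i, L i) : Prop :=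
  IsLeast {x | x ∈ B ∧ x i = l} e

variable [∀ i, SemilatticeInf (L i)] {B : Set (∀ i, L i)}

theorem exists_isBase [Finite ι] [∀ i, WellFoundedLT (L i)] (hB : InfClosed B) {i : ι} {l : L i}
    (hl : l ∈ Function.eval i '' B) : ∃ e, IsBase B i l e := by
  refine exists_isLeast_of_infClosed ?_ hl
  rintro x ⟨hx, rfl⟩ y ⟨hy, hyx⟩
  exact ⟨hB hx hy, by rw [Pi.inf_apply, hyx, inf_idem]⟩

theorem IsBase.le_iff (hB : InfClosed B) {i : ι} {l : L i} {e a : ∀ i, L i}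
    (he : IsBase B i l e) (ha : a ∈ B) : e ≤ a ↔ l ≤ a i := by
  obtain ⟨⟨heB, rfl⟩, hleast⟩ := he
  refine ⟨fun h => h i, fun h => ?_⟩
  have hea : e ≤ e ⊓ a := hleast ⟨hB heB ha, inf_eq_left.2 h⟩
  exact hea.trans inf_le_right

theorem exists_isBase_le_iff [Finite ι] [∀ i, WellFoundedLT (L i)] (hB : InfClosed B)
    {i : ι} {l : L i} {a : ∀ i, L i} (hl : l ∈ Function.eval i '' B) (ha : a ∈ B) :
    (∃ e, IsBase B i l e ∧ e ≤ a) ↔ l ≤ a i := by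
  refine ⟨fun ⟨e, he, hea⟩ => (he.le_iff hB ha).1 hea, fun hla => ?_⟩
  obtain ⟨e, he⟩ := exists_isBase hB hl
  exact ⟨e, he, (he.le_iff hB ha).2 hla⟩

theorem WedgeVeeClosed.boundedJoinClosed_eval_image (hB : WedgeVeeClosed B)
    (hL : ∀ i, IsBoundedComplete (L i)) (i : ι) : BoundedJoinClosed (Function.eval i '' B) := by
  rintro _ ⟨d, hd, rfl⟩ _ ⟨e, he, rfl⟩ _ ⟨c, hc, rfl⟩ hdc hec j hj
  have hbdd : BddAbove {d ⊓ c, e ⊓ c} := bddAbove_pair_iff.2 ⟨c, inf_le_right, inf_le_right⟩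
  obtain ⟨k, hk⟩ := IsBoundedComplete.pi hL hbdd
  have hki : IsLUB {d i, e i} (k i) := by
    simpa only [Pi.inf_apply, inf_eq_left.2 hdc, inf_eq_left.2 hec] using isLUB_pair_pi.1 hk i
  exact ⟨k, hB.2 _ (hB.1 _ hd _ hc) _ (hB.1 _ he _ hc) k hk, hki.unique hj⟩

theorem stmt13_general [Finite ι] [∀ i, WellFoundedLT (L i)]
    (hL : ∀ i, IsBoundedComplete (L i)) (hcoh : ∀ i, IsCoherent (L i))
    (hB : WedgeVeeClosed B) {a b : ∀ i, L i} (ha : a ∈ B) (hb : b ∈ B) :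
    ¬ JoinExistsIn B a b ↔
      ∃ (i : ι) (l l' : L i),
        JoinIrredIn (Function.eval i '' B) l ∧
        JoinIrredIn (Function.eval i '' B) l' ∧
        ¬ JoinExistsIn (Function.eval i '' B) l l' ∧
        (∃ e, IsBase B i l e ∧ e ≤ a) ∧
        (∃ e, IsBase B i l' e ∧ e ≤ b) := by
  have hproj := hB.boundedJoinClosed_eval_image hL
  constructor
  · intro hab
    obtain ⟨i, hi⟩ : ∃ i, ¬ BddAbove {a i, b i} := by
      rwa [hB.joinExistsIn_iff_bddAbove (.pi hL) ha hb, bddAbove_pair_pi, not_forall] at hab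
    obtain ⟨l, l', hl, hl', hla, hlb, hll'⟩ := exists_joinIrredIn_le_not_bddAbove_pair (hL i)
      (hcoh i) (hproj i) (Set.mem_image_of_mem _ ha) (Set.mem_image_of_mem _ hb) hi
    exact ⟨i, l, l', hl, hl', mt JoinExistsIn.bddAbove hll',
      (exists_isBase_le_iff hB.infClosed hl.1 ha).2 hla,
      (exists_isBase_le_iff hB.infClosed hl'.1 hb).2 hlb⟩
  · rintro ⟨i, l, l', hl, hl', hll', hea, heb⟩ ⟨c, hc, hac, hbc, -⟩
    have hlc : l ≤ c i := ((exists_isBase_le_iff hB.infClosed hl.1 ha).1 hea).trans (hac i)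
    have hlc' : l' ≤ c i := ((exists_isBase_le_iff hB.infClosed hl'.1 hb).1 heb).trans (hbc i)
    obtain ⟨j, hjB, hj⟩ := (hproj i).exists_isLUB_mem (hL i) hl.1 hl'.1
      (Set.mem_image_of_mem _ hc) hlc hlc'
    exact hll' ⟨j, isLUBwithin_of_isLUB hj hjB⟩

end Product

/-- For ∨-irreducible `a, b` of `B`, the join `a ∨ b` does not exist in `B` iff there
are a coordinate `i` and ∨-irreducible `l, l'` of `π_i(B)` whose join does not exist
in `π_i(B)` with `e^i_l ≤ a` and `e^i_{l'} ≤ b`. -/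
theorem stmt13 (L : Type*) [SemilatticeInf L] [Fintype L] (hL : ModularSemilattice L)
    (n : ℕ) (B : Set (Fin n → L)) (hB : WedgeVeeClosed B)
    (a b : Fin n → L) (ha : JoinIrredIn B a) (hb : JoinIrredIn B b) :
    ¬ JoinExistsIn B a b ↔
      ∃ (i : Fin n) (l l' : L),
        JoinIrredIn {t : L | ∃ c ∈ B, c i = t} l ∧
        JoinIrredIn {t : L | ∃ c ∈ B, c i = t} l' ∧
        ¬ JoinExistsIn {t : L | ∃ c ∈ B, c i = t} l l' ∧
        (∃ e : Fin n → L, IsLeast {x : Fin n → L | x ∈ B ∧ x i = l} e ∧ e ≤ a) ∧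
        (∃ e : Fin n → L, IsLeast {x : Fin n → L | x ∈ B ∧ x i = l'} e ∧ e ≤ b) := by
  have hcomplete := hL.isBoundedComplete
  exact stmt13_general (fun _ => hcomplete) (fun _ => hL.isCoherent) hB ha.1 hb.1
end

section
/- Let E be a finite set, F ⊆ 2^E a ∩-closed family, and Σ an implicational base of F. Then for every pseudoclosed set P of F, Σ contains an implication A → B whose premise A satisfies A ⊆ P and c•(A) = P. -/
/-- The ∩-closed family determined by a collection `Sg` of implications. -/
def FSigma {E : Type*} (Sg : Set (Set E × Set E)) : Set (Set E) :=
  {X | ∀ p ∈ Sg, (p.2.Nonempty → p.1 ⊆ X → p.2 ⊆ X) ∧ (p.2 = ∅ → ¬ p.1 ⊆ X)}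

/-- A family of subsets closed under binary intersection. -/
def InterClosed {E : Type*} (F : Set (Set E)) : Prop :=
  ∀ X ∈ F, ∀ Y ∈ F, X ∩ Y ∈ F

/-- The closure `c(X)` exists, i.e. some member of `F` contains `X`. -/
def Closable {E : Type*} (F : Set (Set E)) (X : Set E) : Prop :=
  ∃ Y ∈ F, X ⊆ Y

/-- The closure `c(X)`: the intersection of all members of `F` containing `X`
(meaningful when `Closable F X`). -/
def closureOf {E : Type*} (F : Set (Set E)) (X : Set E) : Set E :=
  ⋂₀ {Y | Y ∈ F ∧ X ⊆ Y}

/-- `X` is quasiclosed with respect to the ∩-closed family `F`. -/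
def Quasiclosed {E : Type*} (F : Set (Set E)) (X : Set E) : Prop :=
  (Closable F X →
    ∀ Y, Y ⊆ X → Closable F Y → closureOf F Y ≠ closureOf F X → closureOf F Y ⊆ X) ∧
  (¬ Closable F X → ∀ Y, Y ⊆ X → Closable F Y → closureOf F Y ⊆ X)

/-- `X` is properly quasiclosed: quasiclosed but not closed. -/
def ProperlyQuasiclosed {E : Type*} (F : Set (Set E)) (X : Set E) : Prop :=
  Quasiclosed F X ∧ X ∉ F

/-- The images of `X` and `Y` under the closure operator are equivalent. -/
def EquivImage {E : Type*} (F : Set (Set E)) (X Y : Set E) : Prop :=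
  (Closable F X ∧ Closable F Y ∧ closureOf F X = closureOf F Y) ∨
  (¬ Closable F X ∧ ¬ Closable F Y)

/-- `X` is pseudoclosed: properly quasiclosed and minimal among the properly
quasiclosed sets whose image under the closure operator is equivalent to that of `X`. -/
def Pseudoclosed {E : Type*} (F : Set (Set E)) (X : Set E) : Prop :=
  ProperlyQuasiclosed F X ∧
  ∀ Q, ProperlyQuasiclosed F Q → EquivImage F Q X → Q ⊆ X → Q = X

/-- One step of forward chaining: `i_Σ(X) = X ∪ ⋃ {B : (A → B) ∈ Σ, A ⊆ X}`. -/
def iSig {E : Type*} (Sg : Set (Set E × Set E)) (X : Set E) : Set E :=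
  X ∪ ⋃ p ∈ {p | p ∈ Sg ∧ p.1 ⊆ X}, p.2

/-- `X` contains an inconsistent pair (a pair whose closure does not exist). -/
def HasIncPair {E : Type*} (F : Set (Set E)) (X : Set E) : Prop :=
  ∃ e1 ∈ X, ∃ e2 ∈ X, ¬ Closable F ({e1, e2} : Set E)

/-- The size `s(Σ) = ∑_{(A → B) ∈ Σ} (|A| + |B|)` of a collection of implications. -/
noncomputable def implSize {E : Type*} (Sg : Set (Set E × Set E)) : ℕ :=
  ∑ᶠ p ∈ Sg, (p.1.ncard + p.2.ncard)

/-! A pseudoclosed set `P` is not closed, so it violates some implication `A → B` of the base: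
`A ⊆ P`, and the closure of `A` does not exist or contains `B ⊈ P`. As `P` is quasiclosed, `A` must
then have the same image as `P`, and so does every set between `A` and `P`, in particular
`Q = c•(A)`. A closed set between `A` and `P` would contain `c(A)`, so `Q` is properly quasiclosed,
and minimality of `P` gives `Q = P`. -/

section

variable {E : Type*} {F : Set (Set E)} {A X Y P Q : Set E}

lemma subset_closureOf (F : Set (Set E)) (X : Set E) : X ⊆ closureOf F X :=
  Set.subset_sInter fun _ hZ => hZ.2

lemma closureOf_subset (hY : Y ∈ F) (h : X ⊆ Y) : closureOf F X ⊆ Y :=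
  Set.sInter_subset_of_mem ⟨hY, h⟩

lemma equivImage_iff : EquivImage F X Y ↔ ∀ Z ∈ F, X ⊆ Z ↔ Y ⊆ Z := by
  constructor
  · rintro (⟨-, -, heq⟩ | ⟨hX, hY⟩) Z hZ
    · exact ⟨fun h => (subset_closureOf F Y).trans (heq.ge.trans (closureOf_subset hZ h)),
        fun h => (subset_closureOf F X).trans (heq.le.trans (closureOf_subset hZ h))⟩
    · exact iff_of_false (fun h => hX ⟨Z, hZ, h⟩) (fun h => hY ⟨Z, hZ, h⟩)
  · intro h
    have hcl : Closable F X ↔ Closable F Y := exists_congr fun Z => and_congr_right (h Z)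
    have heq : closureOf F X = closureOf F Y :=
      congrArg Set.sInter (Set.ext fun Z => and_congr_right (h Z))
    by_cases hX : Closable F X
    · exact Or.inl ⟨hX, hcl.1 hX, heq⟩
    · exact Or.inr ⟨hX, mt hcl.2 hX⟩

lemma EquivImage.left_of_between (h : EquivImage F X Y) (hXQ : X ⊆ Q) (hQY : Q ⊆ Y) :
    EquivImage F X Q :=
  equivImage_iff.2 fun Z hZ => ⟨fun hX => hQY.trans ((equivImage_iff.1 h Z hZ).1 hX), hXQ.trans⟩

lemma EquivImage.right_of_between (h : EquivImage F X Y) (hXQ : X ⊆ Q) (hQY : Q ⊆ Y) :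
    EquivImage F Q Y :=
  equivImage_iff.2 fun Z hZ => ⟨fun hQ => (equivImage_iff.1 h Z hZ).1 (hXQ.trans hQ), hQY.trans⟩

lemma equivImage_of_not_closable (hX : ¬ Closable F X) (hXY : X ⊆ Y) : EquivImage F X Y :=
  Or.inr ⟨hX, fun ⟨Z, hZ, hYZ⟩ => hX ⟨Z, hZ, hXY.trans hYZ⟩⟩

lemma quasiclosed_iff :
    Quasiclosed F X ↔ ∀ Y ⊆ X, Closable F Y → EquivImage F Y X ∨ closureOf F Y ⊆ X := by
  by_cases hX : Closable F X <;>
    simp +contextual [Quasiclosed, EquivImage, hX, or_iff_not_imp_left]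

lemma Quasiclosed.sInter {S : Set (Set E)} (hS : ∀ X ∈ S, Quasiclosed F X) :
    Quasiclosed F (⋂₀ S) := by
  refine quasiclosed_iff.2 fun Y hYS hY => or_iff_not_imp_left.2 fun hne => ?_
  refine Set.subset_sInter fun X hX => ?_
  have hSX : ⋂₀ S ⊆ X := Set.sInter_subset_of_mem hX
  exact (quasiclosed_iff.1 (hS X hX) Y (hYS.trans hSX) hY).resolve_left
    fun h => hne (h.left_of_between hYS hSX)

lemma Quasiclosed.equivImage (hP : Quasiclosed F P) (hAP : A ⊆ P)
    (hA : Closable F A → ¬ closureOf F A ⊆ P) : EquivImage F A P := by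
  by_cases hcl : Closable F A
  · exact (quasiclosed_iff.1 hP A hAP hcl).resolve_right (hA hcl)
  · exact equivImage_of_not_closable hcl hAP

lemma Pseudoclosed.closureOf_quasiclosed_eq (hP : Pseudoclosed F P) (hAP : A ⊆ P)
    (hA : Closable F A → ¬ closureOf F A ⊆ P) : closureOf {X | Quasiclosed F X} A = P := by
  obtain ⟨⟨hPq, -⟩, hmin⟩ := hP
  set Q := closureOf {X | Quasiclosed F X} A
  have hAQ : A ⊆ Q := subset_closureOf _ A
  have hQP : Q ⊆ P := closureOf_subset hPq hAP
  have hQq : Quasiclosed F Q := Quasiclosed.sInter fun _ hX => hX.1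
  have hQF : Q ∉ F := fun hQF => hA ⟨Q, hQF, hAQ⟩ ((closureOf_subset hQF hAQ).trans hQP)
  exact hmin Q ⟨hQq, hQF⟩ ((hPq.equivImage hAP hA).right_of_between hAQ hQP) hQP

variable {Sg : Set (Set E × Set E)}

lemma mem_FSigma_iff : X ∈ FSigma Sg ↔ ∀ p ∈ Sg, p.1 ⊆ X → p.2.Nonempty ∧ p.2 ⊆ X := by
  refine forall₂_congr fun p _ => ?_
  rcases p.2.eq_empty_or_nonempty with hB | hB
  · simp [hB]
  · simp [hB, hB.ne_empty]

lemma conclusion_nonempty_and_subset_closureOf {p : Set E × Set E} (hp : p ∈ Sg)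
    (hcl : Closable (FSigma Sg) p.1) :
    p.2.Nonempty ∧ p.2 ⊆ closureOf (FSigma Sg) p.1 := by
  obtain ⟨Y, hY, hpY⟩ := hcl
  exact ⟨(mem_FSigma_iff.1 hY p hp hpY).1,
    Set.subset_sInter fun Z hZ => (mem_FSigma_iff.1 hZ.1 p hp hZ.2).2⟩

lemma exists_not_closureOf_premise_subset (hX : X ∉ FSigma Sg) :
    ∃ p ∈ Sg, p.1 ⊆ X ∧
      (Closable (FSigma Sg) p.1 → ¬ closureOf (FSigma Sg) p.1 ⊆ X) := by
  simp only [mem_FSigma_iff, not_forall] at hX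
  obtain ⟨p, hp, hpX, hviol⟩ := hX
  refine ⟨p, hp, hpX, fun hcl hsub => hviol ?_⟩
  exact (conclusion_nonempty_and_subset_closureOf hp hcl).imp_right fun h => h.trans hsub

theorem stmt15_general (hbase : FSigma Sg = F) (hP : Pseudoclosed F P) :
    ∃ p ∈ Sg, p.1 ⊆ P ∧ closureOf {X : Set E | Quasiclosed F X} p.1 = P := by
  subst hbase
  obtain ⟨p, hp, hpP, hcl⟩ := exists_not_closureOf_premise_subset hP.1.2
  exact ⟨p, hp, hpP, hP.closureOf_quasiclosed_eq hpP hcl⟩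

end

/-- Every implicational base of a ∩-closed family contains, for each pseudoclosed set
`P`, an implication whose premise `A` satisfies `A ⊆ P` and `c•(A) = P`. -/
theorem stmt15 (E : Type*) [Fintype E] (F : Set (Set E)) (Sg : Set (Set E × Set E))
    (hF : InterClosed F) (hbase : FSigma Sg = F)
    (P : Set E) (hP : Pseudoclosed F P) :
    ∃ p ∈ Sg, p.1 ⊆ P ∧ closureOf {X : Set E | Quasiclosed F X} p.1 = P :=
  stmt15_general hbase hP
end
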